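/- Let Ω be a measure space with measure μ of total mass V < ∞, σ > 0, C₁ = 8/log(1 + σ⁻²), and T ≥ 1. Let (β_t)_{1≤t≤T} be nondecreasing nonnegative reals. For each t let s_t : Ω → ℝ be measurable with 0 ≤ s_t(x)² ≤ 1 for all x, and let p_t : Ω → ℝ be a probability density with respect to μ with p_t ≤ π* almost everywhere. Let γ_T ≥ 0 satisfy ∑_{t=1}^T (1/2)·log(1 + σ⁻²·s_t(x)²) ≤ γ_T for μ-almost every x. Then ∑_{t=1}^T (∫ 2·β_t^{1/2}·s_t·p_t dμ)² ≤ π*·V·β_T·γ_T·C₁. -/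

import Mathlib

/-!
For `u ∈ [0, 1]`, Bernoulli's inequality `(1 + a) ^ u ≤ 1 + a * u` gives
`u * log (1 + a) ≤ log (1 + a * u)`. With `a = σ⁻²` and `u = s_t(x)²`, the information-gain
hypothesis becomes the pointwise bound `∑ s_t(x)² ≤ 2 * γ_T / log (1 + σ⁻²)`.

For a probability density `p ≤ π*`, Cauchy–Schwarz for the measure `p dμ` gives
`(∫ s p)² ≤ ∫ s² p ≤ π* ∫ s²`. Multiplying by `4 β_t ≤ 4 β_T`, summing over `t` and integrating
the pointwise bound over a space of mass `V` yields the claim.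
-/

open MeasureTheory

lemma mul_log_one_add_le {a u : ℝ} (ha : 0 ≤ a) (hu0 : 0 ≤ u) (hu1 : u ≤ 1) :
    u * Real.log (1 + a) ≤ Real.log (1 + a * u) := by
  have h := rpow_one_add_le_one_add_mul_self (s := a) (by linarith) hu0 hu1
  have hpos : (0 : ℝ) < 1 + a := by linarith
  rw [← Real.log_rpow hpos, mul_comm a u]
  exact Real.log_le_log (Real.rpow_pos_of_pos hpos u) h

/-- Cauchy–Schwarz for the probability measure `p dμ`, followed by `p ≤ π*`. -/
lemma sq_integral_mul_density_le {Ω : Type*} [MeasurableSpace Ω] (μ : Measure Ω)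
    [IsFiniteMeasure μ] (s p : Ω → ℝ) (c : ℝ) (hsm : Measurable s)
    (hs : ∀ x, (s x) ^ 2 ≤ 1) (hpnn : ∀ x, 0 ≤ p x)
    (hpsum : ∫ x, p x ∂μ = 1) (hpbd : ∀ᵐ x ∂μ, p x ≤ c) :
    (∫ x, s x * p x ∂μ) ^ 2 ≤ c * ∫ x, (s x) ^ 2 ∂μ := by
  have hp : Integrable p μ := integrable_of_integral_eq_one hpsum
  have hsp : Integrable (fun x => s x * p x) μ :=
    hp.bdd_mul hsm.aestronglyMeasurable (c := 1)
      (ae_of_all _ fun x => by simpa using abs_le_one_iff_mul_self_le_one.2 (by nlinarith [hs x]))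
  have hs2 : Integrable (fun x => (s x) ^ 2) μ :=
    Integrable.of_bound (hsm.pow_const 2).aestronglyMeasurable 1
      (ae_of_all _ fun x => by simpa using hs x)
  have hs2p : Integrable (fun x => (s x) ^ 2 * p x) μ :=
    hp.bdd_mul (hsm.pow_const 2).aestronglyMeasurable (c := 1)
      (ae_of_all _ fun x => by simpa using hs x)
  set m := ∫ x, s x * p x ∂μ with hm
  -- The variance of `s` under `p dμ` is nonnegative.
  have hvar : 0 ≤ ∫ x, ((s x) ^ 2 * p x - 2 * m * (s x * p x) + m ^ 2 * p x) ∂μ :=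
    integral_nonneg fun x => by
      have := mul_nonneg (sq_nonneg (s x - m)) (hpnn x)
      simp only [Pi.zero_apply]
      linarith
  have hdiff : Integrable (fun x => (s x) ^ 2 * p x - 2 * m * (s x * p x)) μ :=
    hs2p.sub (hsp.const_mul _)
  rw [integral_add hdiff (hp.const_mul _),
    integral_sub hs2p (hsp.const_mul _), integral_const_mul, integral_const_mul, hpsum,
    ← hm] at hvar
  have hle : ∫ x, (s x) ^ 2 * p x ∂μ ≤ ∫ x, c * (s x) ^ 2 ∂μ := by
    refine integral_mono_ae hs2p (hs2.const_mul c) ?_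
    filter_upwards [hpbd] with x hx
    rw [mul_comm c]
    exact mul_le_mul_of_nonneg_left hx (sq_nonneg _)
  rw [integral_const_mul] at hle
  linarith

/-- Continuous sum-of-squares bound in the SS-GPUCB regret proof:
`∑_{t=1}^T (∫ 2·β_t^{1/2}·s_t·p_t dμ)² ≤ π*·V·β_T·γ_T·C₁`. -/
theorem stmt_11 {Ω : Type*} [MeasurableSpace Ω] (μ : Measure Ω) [IsFiniteMeasure μ]
    (V : ℝ) (hV : V = (μ Set.univ).toReal)
    (σ : ℝ) (hσ : 0 < σ) (C₁ : ℝ) (hC₁ : C₁ = 8 / Real.log (1 + σ⁻¹ ^ 2))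
    (T : ℕ) (hT : 1 ≤ T) (β : ℕ → ℝ)
    (hβnn : ∀ t ∈ Finset.Icc 1 T, 0 ≤ β t)
    (hβmono : ∀ t ∈ Finset.Icc 1 T, ∀ t' ∈ Finset.Icc 1 T, t ≤ t' → β t ≤ β t')
    (s : ℕ → Ω → ℝ) (hsm : ∀ t ∈ Finset.Icc 1 T, Measurable (s t))
    (hs : ∀ t ∈ Finset.Icc 1 T, ∀ x, 0 ≤ (s t x) ^ 2 ∧ (s t x) ^ 2 ≤ 1)
    (p : ℕ → Ω → ℝ) (πstar : ℝ)
    (hpm : ∀ t ∈ Finset.Icc 1 T, Measurable (p t))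
    (hpnn : ∀ t ∈ Finset.Icc 1 T, ∀ x, 0 ≤ p t x)
    (hpsum : ∀ t ∈ Finset.Icc 1 T, ∫ x, p t x ∂μ = 1)
    (hpbd : ∀ t ∈ Finset.Icc 1 T, ∀ᵐ x ∂μ, p t x ≤ πstar)
    (γT : ℝ) (hγnn : 0 ≤ γT)
    (hγ : ∀ᵐ x ∂μ, ∑ t ∈ Finset.Icc 1 T,
      (1 / 2 : ℝ) * Real.log (1 + σ⁻¹ ^ 2 * (s t x) ^ 2) ≤ γT) :
    ∑ t ∈ Finset.Icc 1 T, (∫ x, 2 * Real.sqrt (β t) * s t x * p t x ∂μ) ^ 2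
      ≤ πstar * V * β T * γT * C₁ := by
  subst hV hC₁
  have ha : 0 < σ⁻¹ ^ 2 := by positivity
  have hL : 0 < Real.log (1 + σ⁻¹ ^ 2) := Real.log_pos (by linarith)
  have hTmem : T ∈ Finset.Icc 1 T := Finset.mem_Icc.2 ⟨hT, le_rfl⟩
  have hβT := hβnn T hTmem
  -- `1 = ∫ p ≤ π* V` with `V ≥ 0` forces `π* > 0`.
  have hπ : 0 ≤ πstar := by
    by_contra hneg
    have h1 : ∫ x, p T x ∂μ ≤ ∫ _x, πstar ∂μ :=
      integral_mono_ae (integrable_of_integral_eq_one (hpsum T hTmem))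
        (integrable_const _) (hpbd T hTmem)
    rw [hpsum T hTmem, integral_const, smul_eq_mul] at h1
    nlinarith [measureReal_nonneg (μ := μ) (s := Set.univ)]
  have hs2 : ∀ t ∈ Finset.Icc 1 T, Integrable (fun x => (s t x) ^ 2) μ := fun t ht =>
    Integrable.of_bound ((hsm t ht).pow_const 2).aestronglyMeasurable 1
      (ae_of_all _ fun x => by simpa using (hs t ht x).2)
  have hterm : ∀ t ∈ Finset.Icc 1 T,
      (∫ x, 2 * Real.sqrt (β t) * s t x * p t x ∂μ) ^ 2
        ≤ 4 * β T * πstar * ∫ x, (s t x) ^ 2 ∂μ := by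
    intro t ht
    have hcs := sq_integral_mul_density_le μ (s t) (p t) πstar (hsm t ht)
      (fun x => (hs t ht x).2) (hpnn t ht) (hpsum t ht) (hpbd t ht)
    have hβ := hβmono t ht T hTmem (Finset.mem_Icc.1 ht).2
    simp_rw [mul_assoc (2 * Real.sqrt (β t))]
    rw [integral_const_mul, mul_pow, mul_pow, Real.sq_sqrt (hβnn t ht)]
    calc 2 ^ 2 * β t * (∫ x, s t x * p t x ∂μ) ^ 2
        ≤ 2 ^ 2 * β T * (πstar * ∫ x, (s t x) ^ 2 ∂μ) := by gcongr
      _ = _ := by ring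
  have hsum : ∑ t ∈ Finset.Icc 1 T, ∫ x, (s t x) ^ 2 ∂μ
      ≤ (μ Set.univ).toReal * (2 * γT / Real.log (1 + σ⁻¹ ^ 2)) := by
    rw [← integral_finsetSum _ hs2]
    have hmono : ∫ x, ∑ t ∈ Finset.Icc 1 T, (s t x) ^ 2 ∂μ
        ≤ ∫ _x, 2 * γT / Real.log (1 + σ⁻¹ ^ 2) ∂μ := by
      refine integral_mono_ae (integrable_finsetSum _ hs2) (integrable_const _) ?_
      filter_upwards [hγ] with x hx
      rw [le_div_iff₀ hL, Finset.sum_mul]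
      rw [← Finset.mul_sum] at hx
      have := Finset.sum_le_sum fun t ht =>
        mul_log_one_add_le ha.le (hs t ht x).1 (hs t ht x).2
      linarith
    simpa [Measure.real] using hmono
  calc _ ≤ ∑ t ∈ Finset.Icc 1 T, 4 * β T * πstar * ∫ x, (s t x) ^ 2 ∂μ :=
        Finset.sum_le_sum hterm
    _ = 4 * β T * πstar * ∑ t ∈ Finset.Icc 1 T, ∫ x, (s t x) ^ 2 ∂μ := by
        rw [Finset.mul_sum]
    _ ≤ 4 * β T * πstar *
          ((μ Set.univ).toReal * (2 * γT / Real.log (1 + σ⁻¹ ^ 2))) := by gcongr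
    _ = _ := by ring
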